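/- arXiv:1804.01135 — 2 statements merged into one kernel-verified Lean document; each statement's English description precedes it below -/
import Mathlib

section
/- Assume θ < 0 with θ ≠ -1, and b ≥ 0, c ≥ 0 on Ω. If Ψ₁, Ψ₂ ∈ C²(Ω) ∩ C¹(cl(Ω)) are both classical solutions of (★) in Ω with Ψ₁ = Ψ₂ on ∂Ω, then Ψ₁ = Ψ₂ everywhere in Ω. -/
/-! The difference `w = Ψ₁ - Ψ₂` satisfies a weak maximum principle. Since `-θ > 0`, `s_θ` is monotone,
so where `w > 0` the equations give `∇·(a∇w) = b w + c (s_θ(Ψ₁) - s_θ(Ψ₂)) ≥ 0`.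
For `h(y) = exp(Λ y_k)` with `Λ` large compared with `sup |∂_k a| / a₀`, one has `∇·(a∇h) > 0` in `Ω`.
If `w` were positive somewhere, then for small `ε > 0` the function `w + ε h` would attain its maximum
over `closure Ω` at a point of `Ω` where `w > 0` (`exists_interior_max`); there
`∇·(a∇(w + ε h)) > 0`, contradicting the second derivative test (`divA_nonpos_of_isLocalMax`).
Exchanging `Ψ₁` and `Ψ₂` gives equality. -/

open Real Set MeasureTheory Filter Topology

/-- Divergence-form operator `∇·(a∇u)(x) = ∑ i ∂_i (a ∂_i u)(x)`. -/
noncomputable def divA {d : ℕ} (a u : EuclideanSpace ℝ (Fin d) → ℝ)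
    (x : EuclideanSpace ℝ (Fin d)) : ℝ :=
  ∑ i : Fin d,
    fderiv ℝ (fun y => a y * fderiv ℝ u y (EuclideanSpace.single i (1 : ℝ))) x
      (EuclideanSpace.single i (1 : ℝ))

/-- Squared Euclidean norm of the gradient `|∇u|²(x)`. -/
noncomputable def gradSq {d : ℕ} (u : EuclideanSpace ℝ (Fin d) → ℝ)
    (x : EuclideanSpace ℝ (Fin d)) : ℝ :=
  ∑ i : Fin d, (fderiv ℝ u x (EuclideanSpace.single i (1 : ℝ))) ^ 2


/-- `s_θ(z) = sign(z)·|z|^{-θ}`, so `s_θ(z) = z^{-θ}` for `z > 0` and `s_θ(0) = 0`. -/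
noncomputable def sTheta (θ z : ℝ) : ℝ := Real.sign z * |z| ^ (-θ)

lemma sTheta_mono {θ : ℝ} (hθ : θ < 0) : Monotone (sTheta θ) := by
  intro x y hxy
  have hθ' : 0 < -θ := by linarith
  unfold sTheta
  rcases lt_trichotomy x 0 with hx | hx | hx <;> rcases lt_trichotomy y 0 with hy | hy | hy
  · rw [Real.sign_of_neg hx, Real.sign_of_neg hy, abs_of_neg hx, abs_of_neg hy]
    have := Real.rpow_le_rpow (by linarith : 0 ≤ -y) (by linarith : -y ≤ -x) hθ'.le
    linarith
  · subst hy
    have := Real.rpow_nonneg (abs_nonneg x) (-θ)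
    rw [Real.sign_of_neg hx, Real.sign_zero]
    linarith
  · have h1 := Real.rpow_nonneg (abs_nonneg x) (-θ)
    have h2 := Real.rpow_nonneg (abs_nonneg y) (-θ)
    rw [Real.sign_of_neg hx, Real.sign_of_pos hy]
    linarith
  · linarith
  · simp [hx, hy]
  · subst hx
    have := Real.rpow_nonneg (abs_nonneg y) (-θ)
    rw [Real.sign_of_pos hy, Real.sign_zero]
    linarith
  · linarith
  · linarith
  · rw [Real.sign_of_pos hx, Real.sign_of_pos hy, abs_of_pos hx, abs_of_pos hy]
    have := Real.rpow_le_rpow hx.le hxy hθ'.le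
    linarith

/-- The flux component `a ∂_e u` is differentiable; this makes `divA` additive. -/
lemma differentiableAt_flux {E : Type*} [NormedAddCommGroup E] [NormedSpace ℝ E]
    {a u : E → ℝ} {x : E} (e : E) (ha : DifferentiableAt ℝ a x) (hu : ContDiffAt ℝ 2 u x) :
    DifferentiableAt ℝ (fun y => a y * fderiv ℝ u y e) x := by
  have h : DifferentiableAt ℝ (fderiv ℝ u) x :=
    (hu.fderiv_right (m := 1) (by norm_num)).differentiableAt (by norm_num)
  exact ha.mul (h.clm_apply (differentiableAt_const e))

lemma eventually_differentiableAt {E : Type*} [NormedAddCommGroup E] [NormedSpace ℝ E]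
    {u : E → ℝ} {x : E} (hu : ContDiffAt ℝ 2 u x) : ∀ᶠ y in 𝓝 x, DifferentiableAt ℝ u y := by
  filter_upwards [hu.eventually (by simp)] with y hy
  exact hy.differentiableAt (by norm_num)

lemma divA_add_const_mul {d : ℕ} {a u v : EuclideanSpace ℝ (Fin d) → ℝ}
    {x : EuclideanSpace ℝ (Fin d)} (r : ℝ) (ha : DifferentiableAt ℝ a x)
    (hu : ContDiffAt ℝ 2 u x) (hv : ContDiffAt ℝ 2 v x) :
    divA a (fun y => u y + r * v y) x = divA a u x + r * divA a v x := by
  unfold divA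
  rw [Finset.mul_sum, ← Finset.sum_add_distrib]
  refine Finset.sum_congr rfl fun i _ => ?_
  have hev : (fun y => a y * fderiv ℝ (fun y => u y + r * v y) y (EuclideanSpace.single i (1 : ℝ)))
      =ᶠ[𝓝 x] fun y => a y * fderiv ℝ u y (EuclideanSpace.single i (1 : ℝ))
        + r * (a y * fderiv ℝ v y (EuclideanSpace.single i (1 : ℝ))) := by
    filter_upwards [eventually_differentiableAt hu, eventually_differentiableAt hv] with y h1 h2
    rw [(h1.hasFDerivAt.fun_add (h2.hasFDerivAt.const_mul r)).fderiv]
    simp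
    ring
  rw [hev.fderiv_eq]
  rw [((differentiableAt_flux _ ha hu).hasFDerivAt.fun_add
    ((differentiableAt_flux _ ha hv).hasFDerivAt.const_mul r)).fderiv]
  simp

/-- Second derivative test in divergence form. -/
lemma divA_nonpos_of_isLocalMax {d : ℕ} {a v : EuclideanSpace ℝ (Fin d) → ℝ}
    {p : EuclideanSpace ℝ (Fin d)} (ha : DifferentiableAt ℝ a p) (hap : 0 < a p)
    (hv : ContDiffAt ℝ 2 v p) (hmax : IsLocalMax v p) : divA a v p ≤ 0 := by
  refine Finset.sum_nonpos fun i _ => ?_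
  set e : EuclideanSpace ℝ (Fin d) := EuclideanSpace.single i (1 : ℝ)
  have hD : DifferentiableAt ℝ (fun y => fderiv ℝ v y e) p := by
    simpa using differentiableAt_flux e (differentiableAt_const (1 : ℝ)) hv
  have hgrad : fderiv ℝ v p = 0 := hmax.fderiv_eq_zero
  have hterm : fderiv ℝ (fun y => a y * fderiv ℝ v y e) p e
      = a p * fderiv ℝ (fun y => fderiv ℝ v y e) p e := by
    rw [(ha.hasFDerivAt.fun_mul hD.hasFDerivAt).fderiv]
    simp [hgrad]
  rw [hterm]
  by_contra hcon
  have hpos : 0 < fderiv ℝ (fun y => fderiv ℝ v y e) p e := by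
    by_contra h
    exact hcon (mul_nonpos_of_nonneg_of_nonpos hap.le (not_lt.mp h))
  have hline : ∀ t : ℝ, HasDerivAt (fun t : ℝ => p + t • e) e t := fun t => by
    simpa using ((hasDerivAt_id t).smul_const e).const_add p
  have hl0 : p + (0 : ℝ) • e = p := by simp
  have hlt : Tendsto (fun t : ℝ => p + t • e) (𝓝 0) (𝓝 p) := by
    simpa using (hline 0).continuousAt.tendsto
  set φ : ℝ → ℝ := fun t => v (p + t • e) with hφ
  have hφ' : deriv φ =ᶠ[𝓝 0] fun t => fderiv ℝ v (p + t • e) e := by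
    filter_upwards [hlt.eventually (eventually_differentiableAt hv)] with t ht
    exact (ht.hasFDerivAt.comp_hasDerivAt t (hline t)).deriv
  have hφ'' : deriv (deriv φ) 0 = fderiv ℝ (fun y => fderiv ℝ v y e) p e := by
    rw [hφ'.deriv_eq]
    have hD' : HasFDerivAt (fun y => fderiv ℝ v y e) (fderiv ℝ (fun y => fderiv ℝ v y e) p)
        (p + (0 : ℝ) • e) := by rw [hl0]; exact hD.hasFDerivAt
    exact (hD'.comp_hasDerivAt 0 (hline 0)).deriv
  have hφmax : IsLocalMax φ 0 := by
    have := hlt.eventually hmax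
    filter_upwards [this] with t ht
    simpa [hφ] using ht
  have hφc : ContinuousAt φ 0 := by
    have : ContinuousAt v (p + (0 : ℝ) • e) := by rw [hl0]; exact hv.continuousAt
    exact this.comp (f := fun t : ℝ => p + t • e) (hline 0).continuousAt
  have hφmin : IsLocalMin φ 0 :=
    isLocalMin_of_deriv_deriv_pos (by rw [hφ'']; exact hpos) hφmax.deriv_eq_zero hφc
  -- A point that is both a local maximum and a local minimum is one of local constancy.
  have hconst : φ =ᶠ[𝓝 0] fun _ => φ 0 := by
    filter_upwards [hφmax, hφmin] with t h1 h2
    exact le_antisymm h1 h2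
  have h0 : deriv (deriv φ) 0 = 0 := by
    rw [hconst.deriv.deriv_eq]
    simp
  linarith [hφ'', h0, hpos]

lemma divA_exp {d : ℕ} {a : EuclideanSpace ℝ (Fin d) → ℝ} {x : EuclideanSpace ℝ (Fin d)}
    (ha : DifferentiableAt ℝ a x) (k : Fin d) (Λ : ℝ) :
    divA a (fun y => Real.exp (Λ * y k)) x
      = Λ * Real.exp (Λ * x k) *
        (fderiv ℝ a x (EuclideanSpace.single k (1 : ℝ)) + Λ * a x) := by
  have hh : ∀ y : EuclideanSpace ℝ (Fin d), HasFDerivAt (fun y => Real.exp (Λ * y k))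
      (Real.exp (Λ * y k) • Λ • (EuclideanSpace.proj k : EuclideanSpace ℝ (Fin d) →L[ℝ] ℝ)) y := by
    intro y
    exact (((EuclideanSpace.proj k : EuclideanSpace ℝ (Fin d) →L[ℝ] ℝ).hasFDerivAt).const_mul
      Λ).exp
  have hp : ∀ (i : Fin d) (y : EuclideanSpace ℝ (Fin d)),
      fderiv ℝ (fun y => Real.exp (Λ * y k)) y (EuclideanSpace.single i (1 : ℝ))
        = if k = i then Real.exp (Λ * y k) * Λ else 0 := by
    intro i y
    rw [(hh y).fderiv]
    simp
  unfold divA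
  simp only [hp]
  rw [Finset.sum_eq_single k]
  · simp only [if_true]
    rw [(ha.hasFDerivAt.fun_mul ((hh x).mul_const Λ)).fderiv]
    simp
    ring
  · intro i _ hi
    simp [Ne.symm hi]
  · simp

/-- If `w` is positive somewhere and nonpositive on `frontier Ω`, a small multiple of a positive
function `h` can be added so that the sum has an interior local maximum where `w > 0`. -/
lemma exists_interior_max {E : Type*} [NormedAddCommGroup E] [NormedSpace ℝ E] [ProperSpace E]
    {Ω : Set E} (hΩo : IsOpen Ω) (hΩb : Bornology.IsBounded Ω) {w h : E → ℝ}
    (hw : ContinuousOn w (closure Ω)) (hh : Continuous h) (hpos : ∀ y, 0 < h y)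
    (hbd : ∀ x ∈ frontier Ω, w x ≤ 0) {x : E} (hx : x ∈ Ω) (hwx : 0 < w x) :
    ∃ ε > 0, ∃ p ∈ Ω, 0 < w p ∧ IsLocalMax (fun y => w y + ε * h y) p := by
  have hK : IsCompact (closure Ω) := hΩb.isCompact_closure
  have hne : (closure Ω).Nonempty := ⟨x, subset_closure hx⟩
  obtain ⟨q, _, hq⟩ := hK.exists_isMaxOn hne hh.continuousOn
  -- With this `ε`, `ε * h ≤ w x` on `closure Ω`.
  refine ⟨w x / h q, div_pos hwx (hpos q), ?_⟩
  set ε := w x / h q with hε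
  have hεpos : 0 < ε := div_pos hwx (hpos q)
  have hεq : ε * h q = w x := div_mul_cancel₀ _ (hpos q).ne'
  obtain ⟨p, hpK, hp⟩ := hK.exists_isMaxOn hne
    (hw.add (hh.continuousOn.const_smul ε) : ContinuousOn (fun y => w y + ε * h y) (closure Ω))
  have h1 : w x + ε * h x ≤ w p + ε * h p := hp (subset_closure hx)
  have h2 : h p ≤ h q := hq hpK
  have h3 : ε * h p ≤ ε * h q := mul_le_mul_of_nonneg_left h2 hεpos.le
  have h4 : 0 < ε * h x := mul_pos hεpos (hpos x)
  have hwp : 0 < w p := by linarith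
  have hpΩ : p ∈ Ω := by
    by_contra hn
    have : p ∈ frontier Ω := by
      rw [hΩo.frontier_eq]
      exact ⟨hpK, hn⟩
    linarith [hbd p this]
  exact ⟨p, hpΩ, hwp, hp.isLocalMax (mem_of_superset (hΩo.mem_nhds hpΩ) subset_closure)⟩

/-- Weak maximum principle for `w ↦ ∇·(a∇w)`, with the differential inequality required only
where `w > 0`. -/
lemma nonpos_of_divA_nonneg {d : ℕ} (hd : 1 ≤ d) {Ω U : Set (EuclideanSpace ℝ (Fin d))}
    (hΩo : IsOpen Ω) (hΩb : Bornology.IsBounded Ω) (hU : IsOpen U) (hUΩ : closure Ω ⊆ U)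
    {a w : EuclideanSpace ℝ (Fin d) → ℝ} (ha : ContDiffOn ℝ 1 a U) {a₀ : ℝ} (ha₀ : 0 < a₀)
    (halb : ∀ x ∈ Ω, a₀ ≤ a x) (hw2 : ContDiffOn ℝ 2 w Ω) (hw : ContinuousOn w (closure Ω))
    (hdiv : ∀ x ∈ Ω, 0 < w x → 0 ≤ divA a w x) (hbd : ∀ x ∈ frontier Ω, w x ≤ 0) :
    ∀ x ∈ Ω, w x ≤ 0 := by
  intro x hx
  by_contra hcon
  push Not at hcon
  let k : Fin d := ⟨0, hd⟩
  have hda : ContinuousOn (fun y => fderiv ℝ a y (EuclideanSpace.single k (1 : ℝ))) (closure Ω) :=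
    ((ha.continuousOn_fderiv_of_isOpen hU le_rfl).mono hUΩ).clm_apply continuousOn_const
  obtain ⟨C, hC⟩ := hΩb.isCompact_closure.exists_bound_of_continuousOn hda
  have hC0 : 0 ≤ C := (norm_nonneg _).trans (hC x (subset_closure hx))
  -- `Λ` is chosen so that `Λ a₀ > C ≥ sup |∂_k a|`.
  set Λ : ℝ := (C + 1) / a₀ with hΛ
  have hΛpos : 0 < Λ := by positivity
  have hΛa : Λ * a₀ = C + 1 := div_mul_cancel₀ _ ha₀.ne'
  have hhC : ContDiff ℝ 2 (fun y : EuclideanSpace ℝ (Fin d) => Real.exp (Λ * y k)) := by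
    fun_prop
  obtain ⟨ε, hε, p, hp, hwp, hmax⟩ := exists_interior_max hΩo hΩb hw hhC.continuous
    (fun y => Real.exp_pos _) hbd hx hcon
  have hap : DifferentiableAt ℝ a p :=
    (ha.contDiffAt (hU.mem_nhds (hUΩ (subset_closure hp)))).differentiableAt (by norm_num)
  have hwp2 : ContDiffAt ℝ 2 w p := hw2.contDiffAt (hΩo.mem_nhds hp)
  have hle := divA_nonpos_of_isLocalMax hap (ha₀.trans_le (halb p hp))
    (hwp2.add (contDiffAt_const.mul hhC.contDiffAt)) hmax
  have hsum := divA_add_const_mul ε hap hwp2 (hhC.contDiffAt (x := p))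
  rw [divA_exp hap] at hsum
  have hb := (abs_le.mp (hC p (subset_closure hp))).1
  have hΛap : Λ * a₀ ≤ Λ * a p := mul_le_mul_of_nonneg_left (halb p hp) hΛpos.le
  have hfac : 0 < fderiv ℝ a p (EuclideanSpace.single k (1 : ℝ)) + Λ * a p := by linarith
  have hpos : 0 < ε * (Λ * Real.exp (Λ * p k) *
      (fderiv ℝ a p (EuclideanSpace.single k (1 : ℝ)) + Λ * a p)) := by positivity
  linarith [hdiv p hp hwp]

/-- One-sided comparison; applied twice, with the solutions exchanged, it yields uniqueness. -/
lemma solution_le {d : ℕ} (hd : 1 ≤ d) {Ω U : Set (EuclideanSpace ℝ (Fin d))}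
    (hΩo : IsOpen Ω) (hΩb : Bornology.IsBounded Ω) (hU : IsOpen U) (hUΩ : closure Ω ⊆ U)
    {a b c : EuclideanSpace ℝ (Fin d) → ℝ} (ha : ContDiffOn ℝ 1 a U) {a₀ : ℝ} (ha₀ : 0 < a₀)
    (halb : ∀ x ∈ Ω, a₀ ≤ a x) {θ : ℝ} (hθ : θ < 0)
    (hbnn : ∀ x ∈ Ω, 0 ≤ b x) (hcnn : ∀ x ∈ Ω, 0 ≤ c x)
    {u v : EuclideanSpace ℝ (Fin d) → ℝ}
    (hu2 : ContDiffOn ℝ 2 u Ω) (hu : ContinuousOn u (closure Ω))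
    (hv2 : ContDiffOn ℝ 2 v Ω) (hv : ContinuousOn v (closure Ω))
    (hequ : ∀ x ∈ Ω, divA a u x = b x * u x + c x * sTheta θ (u x))
    (heqv : ∀ x ∈ Ω, divA a v x = b x * v x + c x * sTheta θ (v x))
    (hbd : ∀ x ∈ frontier Ω, u x = v x) : ∀ x ∈ Ω, u x ≤ v x := by
  have key := nonpos_of_divA_nonneg (w := fun y => u y + (-1) * v y) hd hΩo hΩb hU hUΩ ha ha₀ halb
    (hu2.add (contDiffOn_const.mul hv2)) (hu.add (continuousOn_const.mul hv)) ?_ ?_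
  · intro x hx
    have := key x hx
    linarith
  · intro x hx hpos
    have hax : DifferentiableAt ℝ a x :=
      (ha.contDiffAt (hU.mem_nhds (hUΩ (subset_closure hx)))).differentiableAt (by norm_num)
    rw [divA_add_const_mul (-1) hax (hu2.contDiffAt (hΩo.mem_nhds hx))
      (hv2.contDiffAt (hΩo.mem_nhds hx)), hequ x hx, heqv x hx]
    have hvu : v x ≤ u x := by linarith
    have h1 := mul_le_mul_of_nonneg_left hvu (hbnn x hx)
    have h2 := mul_le_mul_of_nonneg_left (sTheta_mono hθ hvu) (hcnn x hx)
    linarith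
  · intro x hx
    have := hbd x hx
    linarith

theorem stmt4 {d : ℕ} (hd : 1 ≤ d) (Ω U : Set (EuclideanSpace ℝ (Fin d)))
    (hΩo : IsOpen Ω) (hΩb : Bornology.IsBounded Ω)
    (hU : IsOpen U) (hUΩ : closure Ω ⊆ U)
    (a b c : EuclideanSpace ℝ (Fin d) → ℝ)
    (ha : ContDiffOn ℝ 1 a U) (a₀ : ℝ) (ha₀ : 0 < a₀) (halb : ∀ x ∈ Ω, a₀ ≤ a x)
    (hbcont : ContinuousOn b (closure Ω)) (hccont : ContinuousOn c (closure Ω))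
    (θ : ℝ) (hθneg : θ < 0) (hθne : θ ≠ -1)
    (hbnn : ∀ x ∈ Ω, 0 ≤ b x) (hcnn : ∀ x ∈ Ω, 0 ≤ c x)
    (Ψ₁ Ψ₂ : EuclideanSpace ℝ (Fin d) → ℝ)
    (hΨ₁2 : ContDiffOn ℝ 2 Ψ₁ Ω) (hΨ₁1 : ContDiffOn ℝ 1 Ψ₁ (closure Ω))
    (hΨ₂2 : ContDiffOn ℝ 2 Ψ₂ Ω) (hΨ₂1 : ContDiffOn ℝ 1 Ψ₂ (closure Ω))
    (heq₁ : ∀ x ∈ Ω, divA a Ψ₁ x = b x * Ψ₁ x + c x * sTheta θ (Ψ₁ x))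
    (heq₂ : ∀ x ∈ Ω, divA a Ψ₂ x = b x * Ψ₂ x + c x * sTheta θ (Ψ₂ x))
    (hbdry : ∀ x ∈ frontier Ω, Ψ₁ x = Ψ₂ x) :
    ∀ x ∈ Ω, Ψ₁ x = Ψ₂ x := by
  intro x hx
  exact le_antisymm
    (solution_le hd hΩo hΩb hU hUΩ ha ha₀ halb hθneg hbnn hcnn hΨ₁2 hΨ₁1.continuousOn
      hΨ₂2 hΨ₂1.continuousOn heq₁ heq₂ hbdry x hx)
    (solution_le hd hΩo hΩb hU hUΩ ha ha₀ halb hθneg hbnn hcnn hΨ₂2 hΨ₂1.continuousOn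
      hΨ₁2 hΨ₁1.continuousOn heq₂ heq₁ (fun y hy => (hbdry y hy).symm) x hx)
end

section
/- Assume θ ≥ 0, b ≥ 0 and c ≤ 0 on Ω. Let g be a fixed boundary datum and n ≥ 1 an integer. Let Ψ_n ∈ C²(Ω) ∩ C¹(cl(Ω)) with Ψ_n > 0 satisfy -∇·(a∇Ψ_n) + bΨ_n = -c(Ψ_n + 1/n)^{-θ} in Ω with Ψ_n = g on ∂Ω; let φ ∈ C²(Ω) ∩ C¹(cl(Ω)) satisfy -∇·(a∇φ) + bφ = 0 in Ω with φ = g on ∂Ω; and let v_n ∈ C²(Ω) ∩ C¹(cl(Ω)) satisfy -∇·(a∇v_n) + b v_n = -c·(1/n)^{-θ} in Ω with v_n = g on ∂Ω. Then v_n ≥ Ψ_n ≥ φ everywhere in Ω. -/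
/-!
Both inequalities are instances of the weak maximum principle for `w ↦ ∇·(a∇w)`: if `w ≤ 0` on
`∂Ω` and `∇·(a∇w) ≥ 0` wherever `w > 0`, then `w ≤ 0` in `Ω` (`weak_max_principle`).
For `w = φ - Ψn` one has `∇·(a∇w) = b w - c (Ψn + 1/n)^(-θ)`, and for `w = Ψn - vn` one has
`∇·(a∇w) = b w + c ((Ψn + 1/n)^(-θ) - (1/n)^(-θ))`; both are nonnegative where `w > 0`, because
`b ≥ 0`, `c ≤ 0` and `t ↦ t^(-θ)` is nonincreasing on the positive reals.

The maximum principle is proved by perturbation: for `l` large, `E x = exp (l x₀)` satisfies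
`∇·(a∇E) > 0` in `Ω` (`divA_exp_pos`). If `w` were positive somewhere, then for small `ε > 0` the
function `w + ε E` would attain its maximum over `cl(Ω)` at an interior point where `w > 0`, and
there `∇·(a∇(w + ε E)) > 0`. At an interior maximum, however, `∇·(a∇·) ≤ 0`
(`divA_nonpos_of_isLocalMax`).
-/


open Real Set MeasureTheory Filter Topology

/-- The flux component `a ∂ₑu` is differentiable inside `Ω`, so that the `fderiv`s in `divA` are
genuine derivatives. -/
lemma differentiableAt_flux_s9 {d : ℕ} {Ω : Set (EuclideanSpace ℝ (Fin d))} (hΩo : IsOpen Ω)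
    {a u : EuclideanSpace ℝ (Fin d) → ℝ} (ha : ContDiffOn ℝ 1 a Ω) (hu : ContDiffOn ℝ 2 u Ω)
    {x : EuclideanSpace ℝ (Fin d)} (hx : x ∈ Ω) (e : EuclideanSpace ℝ (Fin d)) :
    DifferentiableAt ℝ (fun y => a y * fderiv ℝ u y e) x := by
  have h1 : DifferentiableAt ℝ a x :=
    (ha.contDiffAt (hΩo.mem_nhds hx)).differentiableAt (by norm_num)
  have h2 : DifferentiableAt ℝ (fderiv ℝ u) x :=
    ((hu.contDiffAt (hΩo.mem_nhds hx)).fderiv_right (m := 1) (by norm_num)).differentiableAt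
      (by norm_num)
  exact h1.mul (h2.clm_apply (differentiableAt_const e))

lemma divA_add_mul {d : ℕ} {Ω : Set (EuclideanSpace ℝ (Fin d))} (hΩo : IsOpen Ω)
    {a u v : EuclideanSpace ℝ (Fin d) → ℝ} (ha : ContDiffOn ℝ 1 a Ω) (hu : ContDiffOn ℝ 2 u Ω)
    (hv : ContDiffOn ℝ 2 v Ω) (r : ℝ) {x : EuclideanSpace ℝ (Fin d)} (hx : x ∈ Ω) :
    divA a (fun y => u y + r * v y) x = divA a u x + r * divA a v x := by
  unfold divA
  rw [Finset.mul_sum, ← Finset.sum_add_distrib]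
  refine Finset.sum_congr rfl fun i _ => ?_
  set e := EuclideanSpace.single i (1 : ℝ)
  have hE : (fun y => a y * fderiv ℝ (fun y => u y + r * v y) y e) =ᶠ[𝓝 x]
      fun y => a y * fderiv ℝ u y e + r * (a y * fderiv ℝ v y e) := by
    filter_upwards [hΩo.mem_nhds hx] with y hy
    have h1 : DifferentiableAt ℝ u y :=
      (hu.contDiffAt (hΩo.mem_nhds hy)).differentiableAt (by norm_num)
    have h2 : DifferentiableAt ℝ v y :=
      (hv.contDiffAt (hΩo.mem_nhds hy)).differentiableAt (by norm_num)
    have h3 : HasFDerivAt (fun y => u y + r * v y) (fderiv ℝ u y + r • fderiv ℝ v y) y :=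
      h1.hasFDerivAt.add (h2.hasFDerivAt.const_mul r)
    rw [h3.fderiv]
    simp only [add_apply, smul_apply, smul_eq_mul]
    ring
  have h1 := (differentiableAt_flux_s9 hΩo ha hu hx e).hasFDerivAt
  have h2 := (differentiableAt_flux_s9 hΩo ha hv hx e).hasFDerivAt
  rw [hE.fderiv_eq, (h1.fun_add (h2.const_mul r)).fderiv]
  simp

/-- First-derivative form of the second-derivative test: at an interior local maximum the flux
`a ∂ₑu` vanishes, and if its derivative along `e` were positive, `u` would increase strictly along
`e`. -/
lemma flux_deriv_nonpos {d : ℕ} {Ω : Set (EuclideanSpace ℝ (Fin d))} (hΩo : IsOpen Ω)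
    {a u : EuclideanSpace ℝ (Fin d) → ℝ} (ha : ContDiffOn ℝ 1 a Ω) (hu : ContDiffOn ℝ 2 u Ω)
    (hpos : ∀ y ∈ Ω, 0 < a y)
    {x : EuclideanSpace ℝ (Fin d)} (hx : x ∈ Ω) (hmax : IsLocalMax u x)
    (e : EuclideanSpace ℝ (Fin d)) :
    fderiv ℝ (fun y => a y * fderiv ℝ u y e) x e ≤ 0 := by
  by_contra! hlt
  have hline : ∀ t : ℝ, HasDerivAt (fun t : ℝ => x + t • e) e t := fun t => by
    simpa using ((hasDerivAt_id t).smul_const e).const_add x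
  have hx0 : x + (0 : ℝ) • e = x := by simp
  have htend : Tendsto (fun t : ℝ => x + t • e) (𝓝 0) (𝓝 x) := by
    have := (hline 0).continuousAt.tendsto
    rwa [hx0] at this
  have hF : HasDerivAt (fun t : ℝ => a (x + t • e) * fderiv ℝ u (x + t • e) e)
      (fderiv ℝ (fun y => a y * fderiv ℝ u y e) x e) 0 := by
    have h1 := (differentiableAt_flux_s9 hΩo ha hu hx e).hasFDerivAt
    rw [← hx0] at h1
    have := h1.comp_hasDerivAt (0 : ℝ) (hline 0)
    rw [hx0] at this
    exact this
  have hF0 : a (x + (0 : ℝ) • e) * fderiv ℝ u (x + (0 : ℝ) • e) e = 0 := by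
    rw [hx0, hmax.fderiv_eq_zero]; simp
  have hFpos : ∀ᶠ t in 𝓝[>] (0 : ℝ), 0 < a (x + t • e) * fderiv ℝ u (x + t • e) e := by
    have hs := (hasDerivAt_iff_tendsto_slope.1 hF).eventually (lt_mem_nhds hlt)
    have hs' := hs.filter_mono (nhdsWithin_mono (0 : ℝ) (fun t (ht : 0 < t) => ht.ne'))
    filter_upwards [hs', self_mem_nhdsWithin] with t ht (ht0 : 0 < t)
    rw [slope_def_field, hF0, sub_zero, sub_zero] at ht
    exact (div_pos_iff_of_pos_right ht0).1 ht
  have hΩe : ∀ᶠ t in 𝓝 (0 : ℝ), x + t • e ∈ Ω := htend.eventually (hΩo.mem_nhds hx)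
  have hme : ∀ᶠ t in 𝓝 (0 : ℝ), u (x + t • e) ≤ u x := htend.eventually hmax
  obtain ⟨δ, hδ, hδs⟩ := mem_nhdsGT_iff_exists_Ioo_subset.1
    (hFpos.and ((hΩe.and hme).filter_mono nhdsWithin_le_nhds))
  have hδ : 0 < δ := hδ
  have hIcc : ∀ t ∈ Icc 0 (δ / 2), x + t • e ∈ Ω := by
    intro t ht
    rcases ht.1.eq_or_lt with h | h
    · rw [← h, hx0]; exact hx
    · exact (hδs ⟨h, by linarith [ht.2]⟩).2.1
  have hd : ∀ t ∈ Icc 0 (δ / 2),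
      HasDerivAt (fun t : ℝ => u (x + t • e)) (fderiv ℝ u (x + t • e) e) t := fun t ht =>
    (((hu.contDiffAt (hΩo.mem_nhds (hIcc t ht))).differentiableAt
      (by norm_num)).hasFDerivAt).comp_hasDerivAt t (hline t)
  have hmono : StrictMonoOn (fun t : ℝ => u (x + t • e)) (Icc 0 (δ / 2)) := by
    refine strictMonoOn_of_deriv_pos (convex_Icc _ _)
      (fun t ht => (hd t ht).continuousAt.continuousWithinAt) fun t ht => ?_
    rw [interior_Icc] at ht
    have ht' := Ioo_subset_Icc_self ht
    rw [(hd t ht').deriv]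
    exact pos_of_mul_pos_right (hδs ⟨ht.1, by linarith [ht.2]⟩).1 (hpos _ (hIcc t ht')).le
  have h1 := hmono (left_mem_Icc.2 (by linarith)) (right_mem_Icc.2 (by linarith))
    (show (0 : ℝ) < δ / 2 by linarith)
  have h2 := (hδs (show δ / 2 ∈ Ioo 0 δ from ⟨by linarith, by linarith⟩)).2.2
  simp only [hx0] at h1
  linarith

lemma divA_nonpos_of_isLocalMax_s9 {d : ℕ} {Ω : Set (EuclideanSpace ℝ (Fin d))} (hΩo : IsOpen Ω)
    {a u : EuclideanSpace ℝ (Fin d) → ℝ} (ha : ContDiffOn ℝ 1 a Ω) (hu : ContDiffOn ℝ 2 u Ω)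
    (hpos : ∀ y ∈ Ω, 0 < a y)
    {x : EuclideanSpace ℝ (Fin d)} (hx : x ∈ Ω) (hmax : IsLocalMax u x) :
    divA a u x ≤ 0 :=
  Finset.sum_nonpos fun _ _ => flux_deriv_nonpos hΩo ha hu hpos hx hmax _

/-- The exponential barrier is a strict subsolution as soon as `l a + ∂ⱼa > 0`. -/
lemma divA_exp_pos {d : ℕ} (j : Fin d) {a : EuclideanSpace ℝ (Fin d) → ℝ}
    {x : EuclideanSpace ℝ (Fin d)} (hax : DifferentiableAt ℝ a x) {l : ℝ} (hl : 0 < l)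
    (h : 0 < l * a x + fderiv ℝ a x (EuclideanSpace.single j (1 : ℝ))) :
    0 < divA a (fun y => exp (l * y j)) x := by
  have hE : ∀ y : EuclideanSpace ℝ (Fin d), HasFDerivAt (fun y => exp (l * y j))
      (exp (l * y j) • l • (EuclideanSpace.proj j : EuclideanSpace ℝ (Fin d) →L[ℝ] ℝ)) y :=
    fun y => (((EuclideanSpace.proj j :
      EuclideanSpace ℝ (Fin d) →L[ℝ] ℝ).hasFDerivAt).const_mul l).exp
  unfold divA
  rw [Finset.sum_eq_single j]
  · have hf : (fun y => a y * fderiv ℝ (fun y : EuclideanSpace ℝ (Fin d) => exp (l * y j)) y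
        (EuclideanSpace.single j (1 : ℝ))) = fun y => a y * (exp (l * y j) * l) := by
      funext y
      rw [(hE y).fderiv]
      simp
    rw [hf, (hax.hasFDerivAt.fun_mul ((hE x).mul_const l)).fderiv]
    have h2 : 0 < exp (l * x j) * l *
        (l * a x + fderiv ℝ a x (EuclideanSpace.single j (1 : ℝ))) := by positivity
    simp
    linarith
  · intro i _ hij
    have hf : (fun y => a y * fderiv ℝ (fun y : EuclideanSpace ℝ (Fin d) => exp (l * y j)) y
        (EuclideanSpace.single i (1 : ℝ))) = fun _ => 0 := by
      funext y
      rw [(hE y).fderiv]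
      simp [hij.symm]
    rw [hf]
    simp
  · simp

lemma weak_max_principle {d : ℕ} (hd : 1 ≤ d) {Ω U : Set (EuclideanSpace ℝ (Fin d))}
    (hΩo : IsOpen Ω) (hΩb : Bornology.IsBounded Ω) (hU : IsOpen U) (hUΩ : closure Ω ⊆ U)
    {a : EuclideanSpace ℝ (Fin d) → ℝ}
    (ha : ContDiffOn ℝ 1 a U) {a₀ : ℝ} (ha₀ : 0 < a₀) (halb : ∀ x ∈ Ω, a₀ ≤ a x)
    {w : EuclideanSpace ℝ (Fin d) → ℝ} (hw2 : ContDiffOn ℝ 2 w Ω)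
    (hwc : ContinuousOn w (closure Ω)) (hwbd : ∀ x ∈ frontier Ω, w x ≤ 0)
    (hw : ∀ x ∈ Ω, 0 < w x → 0 ≤ divA a w x) :
    ∀ x ∈ Ω, w x ≤ 0 := by
  intro x₀ hx₀
  by_contra! hlt
  have hK : IsCompact (closure Ω) := hΩb.isCompact_closure
  have haΩ : ContDiffOn ℝ 1 a Ω := ha.mono (subset_closure.trans hUΩ)
  let j : Fin d := ⟨0, hd⟩
  have hca : ContinuousOn (fun y => fderiv ℝ a y (EuclideanSpace.single j (1 : ℝ)))
      (closure Ω) :=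
    ((ha.continuousOn_fderiv_of_isOpen hU (by norm_num)).mono hUΩ).clm_apply continuousOn_const
  obtain ⟨M, hM⟩ := hK.exists_bound_of_continuousOn hca
  have hM0 : 0 ≤ M := (norm_nonneg _).trans (hM x₀ (subset_closure hx₀))
  -- With this choice, `l a + ∂ⱼa ≥ l a₀ - M = 1` on `Ω`.
  set l : ℝ := (M + 1) / a₀ with hl
  have hl0 : 0 < l := by positivity
  have hla : l * a₀ = M + 1 := by rw [hl]; field_simp
  set E : EuclideanSpace ℝ (Fin d) → ℝ := fun y => exp (l * y j) with hEdef
  have hEs : ContDiff ℝ 2 E := by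
    have : ContDiff ℝ 2 (fun y : EuclideanSpace ℝ (Fin d) => y j) :=
      (EuclideanSpace.proj j : EuclideanSpace ℝ (Fin d) →L[ℝ] ℝ).contDiff
    exact (contDiff_const.mul this).exp
  have hEpos : ∀ y, 0 < E y := fun y => exp_pos _
  have hEdiv : ∀ x ∈ Ω, 0 < divA a E x := by
    intro x hx
    refine divA_exp_pos j ((haΩ.contDiffAt (hΩo.mem_nhds hx)).differentiableAt (by norm_num)) hl0 ?_
    have h1 := (abs_le.1 (hM x (subset_closure hx))).1
    have h2 := mul_le_mul_of_nonneg_left (halb x hx) hl0.le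
    linarith
  obtain ⟨B, hB⟩ := hK.exists_bound_of_continuousOn hEs.continuous.continuousOn
  have hEB : ∀ y ∈ closure Ω, E y ≤ B := fun y hy => (le_abs_self _).trans (hB y hy)
  have hB0 : 0 < B := (hEpos x₀).trans_le (hEB x₀ (subset_closure hx₀))
  -- `ε` is small enough that the perturbation cannot exceed `w x₀` on `cl(Ω)`.
  set ε : ℝ := w x₀ / B with hε
  have hε0 : 0 < ε := by positivity
  have hεB : ε * B = w x₀ := by rw [hε]; field_simp
  obtain ⟨z, hz, hzmax⟩ := hK.exists_isMaxOn ⟨x₀, subset_closure hx₀⟩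
    (hwc.add (continuousOn_const.mul hEs.continuous.continuousOn) :
      ContinuousOn (fun y => w y + ε * E y) (closure Ω))
  have hwz : 0 < w z := by
    have h1 : w x₀ + ε * E x₀ ≤ w z + ε * E z := hzmax (subset_closure hx₀)
    have h2 := mul_le_mul_of_nonneg_left (hEB z hz) hε0.le
    have h3 := mul_pos hε0 (hEpos x₀)
    linarith
  have hzΩ : z ∈ Ω := by
    by_contra hzn
    have : z ∈ frontier Ω := by rw [hΩo.frontier_eq]; exact ⟨hz, hzn⟩
    linarith [hwbd z this]
  have hloc : IsLocalMax (fun y => w y + ε * E y) z :=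
    (hzmax.on_subset subset_closure).isLocalMax (hΩo.mem_nhds hzΩ)
  have h1 := divA_nonpos_of_isLocalMax_s9 hΩo haΩ (hw2.add (contDiffOn_const.mul hEs.contDiffOn))
    (fun y hy => ha₀.trans_le (halb y hy)) hzΩ hloc
  have h2 := divA_add_mul hΩo haΩ hw2 hEs.contDiffOn ε hzΩ
  have h3 := mul_pos hε0 (hEdiv z hzΩ)
  have h4 := hw z hzΩ hwz
  linarith

theorem stmt9 {d : ℕ} (hd : 1 ≤ d) (Ω U : Set (EuclideanSpace ℝ (Fin d)))
    (hΩo : IsOpen Ω) (hΩb : Bornology.IsBounded Ω)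
    (hU : IsOpen U) (hUΩ : closure Ω ⊆ U)
    (a b c : EuclideanSpace ℝ (Fin d) → ℝ)
    (ha : ContDiffOn ℝ 1 a U) (a₀ : ℝ) (ha₀ : 0 < a₀) (halb : ∀ x ∈ Ω, a₀ ≤ a x)
    (hbcont : ContinuousOn b (closure Ω)) (hccont : ContinuousOn c (closure Ω))
    (θ : ℝ) (hθ : 0 ≤ θ)
    (hbnn : ∀ x ∈ Ω, 0 ≤ b x) (hcnp : ∀ x ∈ Ω, c x ≤ 0)
    (g : EuclideanSpace ℝ (Fin d) → ℝ) (n : ℕ) (hn : 1 ≤ n)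
    (Ψn φ vn : EuclideanSpace ℝ (Fin d) → ℝ)
    (hΨ2 : ContDiffOn ℝ 2 Ψn Ω) (hΨ1 : ContDiffOn ℝ 1 Ψn (closure Ω))
    (hΨpos : ∀ x ∈ closure Ω, 0 < Ψn x)
    (hΨeq : ∀ x ∈ Ω,
      -divA a Ψn x + b x * Ψn x = -c x * (Ψn x + 1 / (n : ℝ)) ^ (-θ))
    (hΨbd : ∀ x ∈ frontier Ω, Ψn x = g x)
    (hφ2 : ContDiffOn ℝ 2 φ Ω) (hφ1 : ContDiffOn ℝ 1 φ (closure Ω))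
    (hφeq : ∀ x ∈ Ω, -divA a φ x + b x * φ x = 0)
    (hφbd : ∀ x ∈ frontier Ω, φ x = g x)
    (hv2 : ContDiffOn ℝ 2 vn Ω) (hv1 : ContDiffOn ℝ 1 vn (closure Ω))
    (hveq : ∀ x ∈ Ω,
      -divA a vn x + b x * vn x = -c x * ((1 : ℝ) / (n : ℝ)) ^ (-θ))
    (hvbd : ∀ x ∈ frontier Ω, vn x = g x) :
    ∀ x ∈ Ω, φ x ≤ Ψn x ∧ Ψn x ≤ vn x := by
  have haΩ : ContDiffOn ℝ 1 a Ω := ha.mono (subset_closure.trans hUΩ)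
  have hn0 : (0 : ℝ) < 1 / (n : ℝ) := by
    have : (0 : ℝ) < n := by exact_mod_cast hn
    positivity
  intro x hx
  constructor
  · have key := weak_max_principle hd hΩo hΩb hU hUΩ ha ha₀ halb
      (w := fun y => φ y + (-1) * Ψn y) (hφ2.add (contDiffOn_const.mul hΨ2))
      (hφ1.continuousOn.add (continuousOn_const.mul hΨ1.continuousOn))
      (fun y hy => by simp [hφbd y hy, hΨbd y hy]) (fun y hy hwy => by
        rw [divA_add_mul hΩo haΩ hφ2 hΨ2 (-1) hy]
        have h1 := hφeq y hy
        have h2 := hΨeq y hy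
        have h3 := mul_nonneg (hbnn y hy) hwy.le
        have h4 : 0 ≤ -c y * (Ψn y + 1 / (n : ℝ)) ^ (-θ) :=
          mul_nonneg (neg_nonneg.2 (hcnp y hy))
            (rpow_nonneg (add_pos (hΨpos y (subset_closure hy)) hn0).le _)
        linarith) x hx
    linarith
  · have key := weak_max_principle hd hΩo hΩb hU hUΩ ha ha₀ halb
      (w := fun y => Ψn y + (-1) * vn y) (hΨ2.add (contDiffOn_const.mul hv2))
      (hΨ1.continuousOn.add (continuousOn_const.mul hv1.continuousOn))
      (fun y hy => by simp [hvbd y hy, hΨbd y hy]) (fun y hy hwy => by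
        rw [divA_add_mul hΩo haΩ hΨ2 hv2 (-1) hy]
        have h1 := hveq y hy
        have h2 := hΨeq y hy
        have h3 := mul_nonneg (hbnn y hy) hwy.le
        have h4 : (Ψn y + 1 / (n : ℝ)) ^ (-θ) ≤ (1 / (n : ℝ)) ^ (-θ) :=
          rpow_le_rpow_of_nonpos hn0 (by linarith [hΨpos y (subset_closure hy)])
            (neg_nonpos.2 hθ)
        have h5 := mul_le_mul_of_nonneg_left h4 (neg_nonneg.2 (hcnp y hy))
        linarith) x hx
    linarith
end
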